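/- arXiv:1909.02904 — 2 statements merged into one kernel-verified Lean document; each statement's English description precedes it below -/
import Mathlib

section
/- Let ρ be a density matrix on ℂ^n with spectral decomposition ρ = Σ_i p_i v_i v_i†, and let A, B be Hermitian n×n complex matrices. Then I_SLD(ρ,A) · V_ρ(B) ≥ (1/4)|Tr[ρ(AB − BA)]|². -/
open Matrix
open scoped ComplexOrder

/-- The variance `V_ρ(X) = Tr[ρX²] − (Tr[ρX])²` (real parts of the traces,
which are real numbers for a density matrix `ρ` and Hermitian `X`). -/
noncomputable def matVariance {n : ℕ} (ρ X : Matrix (Fin n) (Fin n) ℂ) : ℝ :=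
  ((ρ * (X * X)).trace).re - (((ρ * X).trace).re) ^ 2

/-- The SLD skew information `I_SLD(ρ,A) = (1/2) Σ_{i,j} (p_i−p_j)²/(p_i+p_j) |v_i† A v_j|²`,
expressed via a spectral decomposition of `ρ` with eigenvalues `p` and orthonormal
eigenvectors `v`.  (Terms with `p i + p j = 0` vanish, since division by zero is zero.) -/
noncomputable def sldSkew {n : ℕ} (p : Fin n → ℝ) (v : Fin n → Fin n → ℂ)
    (A : Matrix (Fin n) (Fin n) ℂ) : ℝ :=
  (1 / 2) * ∑ i, ∑ j, (p i - p j) ^ 2 / (p i + p j) * ‖star (v i) ⬝ᵥ A.mulVec (v j)‖ ^ 2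

lemma sld_trace_diag {n : ℕ} (d : Fin n → ℂ) (M N : Matrix (Fin n) (Fin n) ℂ) :
    (diagonal d * (M * N)).trace = ∑ i, ∑ j, d i * (M i j * N j i) := by
  simp only [Matrix.trace, Matrix.diag_apply, Matrix.diagonal_mul]
  simp only [Matrix.mul_apply, Finset.mul_sum]

lemma sld_comm {n : ℕ} (p : Fin n → ℝ) (a c : Matrix (Fin n) (Fin n) ℂ) :
    (diagonal (fun i => (p i : ℂ)) * (a * c - c * a)).trace
      = ∑ i, ∑ j, ((p i : ℂ) - p j) * (a i j * c j i) := by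
  rw [Matrix.mul_sub, Matrix.trace_sub, sld_trace_diag, sld_trace_diag]
  rw [Finset.sum_comm (f := fun i j => (p i : ℂ) * (c i j * a j i)), ← Finset.sum_sub_distrib]
  refine Finset.sum_congr rfl fun i _ => ?_
  rw [← Finset.sum_sub_distrib]
  exact Finset.sum_congr rfl fun j _ => by ring

lemma sld_core {n : ℕ} (p : Fin n → ℝ) (hp : ∀ i, 0 ≤ p i) (a c : Matrix (Fin n) (Fin n) ℂ)
    (hc : c.IsHermitian) :
    (1 / 4) * ‖(diagonal (fun i => (p i : ℂ)) * (a * c - c * a)).trace‖ ^ 2 ≤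
      ((1 / 2) * ∑ i, ∑ j, (p i - p j) ^ 2 / (p i + p j) * ‖a i j‖ ^ 2) *
        ((diagonal (fun i => (p i : ℂ)) * (c * c)).trace).re := by
  have hn : ∀ i j, ‖c j i‖ = ‖c i j‖ := fun i j => by
    rw [← hc.apply i j, norm_star]
  have hV : ((diagonal (fun i => (p i : ℂ)) * (c * c)).trace).re
      = (1 / 2) * ∑ i, ∑ j, (p i + p j) * ‖c i j‖ ^ 2 := by
    have h1 : ((diagonal (fun i => (p i : ℂ)) * (c * c)).trace).re
        = ∑ i, ∑ j, p i * ‖c i j‖ ^ 2 := by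
      rw [sld_trace_diag, Complex.re_sum]
      refine Finset.sum_congr rfl fun i _ => ?_
      rw [Complex.re_sum]
      refine Finset.sum_congr rfl fun j _ => ?_
      rw [← hc.apply j i, Complex.star_def, Complex.mul_conj, Complex.normSq_eq_norm_sq]
      norm_cast
    have h2 : ∑ i, ∑ j, p j * ‖c i j‖ ^ 2 = ∑ i, ∑ j, p i * ‖c i j‖ ^ 2 := by
      rw [Finset.sum_comm]
      refine Finset.sum_congr rfl fun i _ => Finset.sum_congr rfl fun j _ => ?_
      rw [hn]
    simp only [add_mul, Finset.sum_add_distrib]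
    rw [h1, h2]; ring
  rw [hV, sld_comm]
  have hle : ‖∑ i, ∑ j, ((p i : ℂ) - p j) * (a i j * c j i)‖
      ≤ ∑ x : Fin n × Fin n, |p x.1 - p x.2| * (‖a x.1 x.2‖ * ‖c x.1 x.2‖) := by
    rw [← Fintype.sum_prod_type' (f := fun i j => ((p i : ℂ) - p j) * (a i j * c j i))]
    refine (norm_sum_le _ _).trans (le_of_eq (Finset.sum_congr rfl fun x _ => ?_))
    rw [norm_mul, norm_mul, hn, ← Complex.ofReal_sub, Complex.norm_real, Real.norm_eq_abs]
  have hcs := Finset.sum_sq_le_sum_mul_sum_of_sq_eq_mul (Finset.univ : Finset (Fin n × Fin n))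
    (r := fun x => |p x.1 - p x.2| * (‖a x.1 x.2‖ * ‖c x.1 x.2‖))
    (f := fun x => (p x.1 - p x.2) ^ 2 / (p x.1 + p x.2) * ‖a x.1 x.2‖ ^ 2)
    (g := fun x => (p x.1 + p x.2) * ‖c x.1 x.2‖ ^ 2)
    (fun x _ => mul_nonneg (div_nonneg (sq_nonneg _) (add_nonneg (hp _) (hp _))) (sq_nonneg _))
    (fun x _ => mul_nonneg (add_nonneg (hp _) (hp _)) (sq_nonneg _))
    (fun x _ => by
      rw [mul_pow, sq_abs, mul_pow]
      by_cases h : p x.1 + p x.2 = 0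
      · have h1 : p x.1 = 0 := by linarith [hp x.1, hp x.2]
        have h2 : p x.2 = 0 := by linarith [hp x.1, hp x.2]
        simp [h1, h2]
      · field_simp)
  rw [Fintype.sum_prod_type' (f := fun i j => (p i - p j) ^ 2 / (p i + p j) * ‖a i j‖ ^ 2),
    Fintype.sum_prod_type' (f := fun i j => (p i + p j) * ‖c i j‖ ^ 2)] at hcs
  have := pow_le_pow_left₀ (norm_nonneg _) hle 2
  linarith

/-- Coherence–variance uncertainty relation at `f_SLD`:
`I_SLD(ρ,A) · V_ρ(B) ≥ (1/4)|Tr[ρ[A,B]]|²`. -/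
theorem sld_coherence_variance_uncertainty {n : ℕ}
    (ρ A B : Matrix (Fin n) (Fin n) ℂ)
    (hρ : ρ.PosSemidef) (htr : ρ.trace = 1)
    (hA : A.IsHermitian) (hB : B.IsHermitian)
    (p : Fin n → ℝ) (v : Fin n → Fin n → ℂ)
    (hp : ∀ i, 0 ≤ p i)
    (horth : ∀ i j, star (v i) ⬝ᵥ v j = if i = j then 1 else 0)
    (hdec : ρ = ∑ i, (p i : ℂ) • vecMulVec (v i) (star (v i))) :
    (1 / 4) * ‖(ρ * (A * B - B * A)).trace‖ ^ 2 ≤ sldSkew p v A * matVariance ρ B := by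
  set U : Matrix (Fin n) (Fin n) ℂ := Matrix.of fun j i => v i j with hU
  set D : Matrix (Fin n) (Fin n) ℂ := diagonal (fun i => (p i : ℂ)) with hD
  have hUU : Uᴴ * U = 1 := by
    ext i j
    rw [Matrix.one_apply, ← horth i j]
    simp [Matrix.mul_apply, dotProduct, hU]
  have hUU' : U * Uᴴ = 1 := mul_eq_one_comm.mp hUU
  have hρD : ρ = U * D * Uᴴ := by
    rw [hdec]
    ext i j
    rw [Matrix.sum_apply, Matrix.mul_apply]
    refine Finset.sum_congr rfl fun k _ => ?_
    simp [hD, hU, Matrix.mul_diagonal, vecMulVec_apply]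
    ring
  have htrans : ∀ X, (ρ * X).trace = (D * (Uᴴ * X * U)).trace := fun X => by
    rw [hρD, show U * D * Uᴴ * X = U * (D * Uᴴ * X) by simp only [Matrix.mul_assoc],
      Matrix.trace_mul_comm]
    simp only [Matrix.mul_assoc]
  have hmul : ∀ X Y, Uᴴ * (X * Y) * U = (Uᴴ * X * U) * (Uᴴ * Y * U) := fun X Y => by
    rw [show (Uᴴ * X * U) * (Uᴴ * Y * U) = Uᴴ * X * (U * Uᴴ) * Y * U by
      simp only [Matrix.mul_assoc], hUU']
    simp only [Matrix.mul_assoc, Matrix.one_mul]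
  have hDtr : D.trace = 1 := by
    have := htrans 1
    rwa [Matrix.mul_one, Matrix.mul_one, hUU, Matrix.mul_one, htr, eq_comm] at this
  set a := Uᴴ * A * U with ha
  set b := Uᴴ * B * U with hb
  have hbH : b.IsHermitian := isHermitian_conjTranspose_mul_mul U hB
  set m : ℝ := ((D * b).trace).re with hm
  set c := b - (m : ℂ) • (1 : Matrix (Fin n) (Fin n) ℂ) with hc
  have hcH : c.IsHermitian := by
    refine hbH.sub ?_
    rw [Matrix.IsHermitian, conjTranspose_smul, conjTranspose_one]
    simp
  have hcomm : a * c - c * a = a * b - b * a := by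
    rw [hc]
    simp only [Matrix.mul_sub, Matrix.sub_mul, Matrix.mul_smul, Matrix.smul_mul, Matrix.mul_one,
      Matrix.one_mul]
    abel
  have hcc : D * (c * c) = D * (b * b) - (2 * m : ℂ) • (D * b) + (m ^ 2 : ℂ) • D := by
    rw [hc]
    simp only [Matrix.mul_sub, Matrix.sub_mul, Matrix.mul_smul, Matrix.smul_mul, Matrix.mul_one,
      Matrix.one_mul]
    module
  have hvar : matVariance ρ B = ((D * (c * c)).trace).re := by
    rw [matVariance, htrans, htrans, hmul, hcc, Matrix.trace_add, Matrix.trace_sub,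
      Matrix.trace_smul, Matrix.trace_smul, hDtr, ← hb, ← hm]
    have e1 : ((2 * m : ℂ) • (D * b).trace).re = 2 * m * m := by
      rw [smul_eq_mul, show (2 * m : ℂ) = ((2 * m : ℝ) : ℂ) by push_cast; rfl,
        Complex.re_ofReal_mul]
    have e2 : ((m ^ 2 : ℂ) • (1 : ℂ)).re = m ^ 2 := by
      rw [smul_eq_mul, mul_one]; norm_cast
    rw [Complex.add_re, Complex.sub_re, e1, e2]
    ring
  have hskew : sldSkew p v A
      = (1 / 2) * ∑ i, ∑ j, (p i - p j) ^ 2 / (p i + p j) * ‖a i j‖ ^ 2 := by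
    have : ∀ i j, star (v i) ⬝ᵥ A.mulVec (v j) = a i j := fun i j => by
      rw [ha, Matrix.mul_assoc, Matrix.mul_apply]
      simp [dotProduct, hU, Matrix.mul_apply, mulVec]
    simp only [sldSkew, this]
  have hlhs : (ρ * (A * B - B * A)).trace = (D * (a * c - c * a)).trace := by
    rw [hcomm, htrans, Matrix.mul_sub, Matrix.sub_mul, hmul, hmul]
  rw [hlhs, hskew, hvar]
  exact sld_core p hp a c hcH
end

section
/- Let ρ be a density matrix on ℂ^n with spectral decomposition ρ = Σ_i p_i v_i v_i†, and let A be a Hermitian n×n complex matrix. Then I_SLD(ρ,A) ≤ V_ρ(A), i.e. (1/2) Σ_{i,j} (p_i − p_j)²/(p_i + p_j) |v_i† A v_j|² ≤ Tr[ρA²] − (Tr[ρA])². -/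
open Matrix
open scoped ComplexOrder

/-- Property P1 for the SLD skew information: `I_SLD(ρ,A) ≤ V_ρ(A)`. -/
theorem sldSkew_le_variance {n : ℕ}
    (ρ A : Matrix (Fin n) (Fin n) ℂ)
    (hρ : ρ.PosSemidef) (htr : ρ.trace = 1)
    (hA : A.IsHermitian)
    (p : Fin n → ℝ) (v : Fin n → Fin n → ℂ)
    (hp : ∀ i, 0 ≤ p i)
    (horth : ∀ i j, star (v i) ⬝ᵥ v j = if i = j then 1 else 0)
    (hdec : ρ = ∑ i, (p i : ℂ) • vecMulVec (v i) (star (v i))) :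
    sldSkew p v A ≤ matVariance ρ A := by
  classical
  set U : Matrix (Fin n) (Fin n) ℂ := Matrix.of fun i j => v j i with hU
  set D : Matrix (Fin n) (Fin n) ℂ := Matrix.diagonal fun i => (p i : ℂ) with hD
  have h1 : Uᴴ * U = 1 := by
    ext i j
    have := horth i j
    simp only [Matrix.mul_apply, hU, Matrix.conjTranspose_apply, Matrix.of_apply,
      Matrix.one_apply]
    simpa [dotProduct] using this
  have h2 : U * Uᴴ = 1 := mul_eq_one_comm.mp h1
  have h3 : ρ = U * D * Uᴴ := by
    rw [hdec]
    ext i j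
    rw [Matrix.mul_apply, Matrix.sum_apply]
    refine Finset.sum_congr rfl fun k _ => ?_
    simp [hU, hD, Matrix.mul_diagonal, vecMulVec_apply]
    ring
  set B : Matrix (Fin n) (Fin n) ℂ := Uᴴ * A * U with hB
  have hBe : ∀ i j, star (v i) ⬝ᵥ A.mulVec (v j) = B i j := by
    intro i j
    rw [hB, Matrix.mul_assoc, Matrix.mul_apply]
    rfl
  have hBH : ∀ i j, B j i = star (B i j) := by
    have : Bᴴ = B := by
      rw [hB]
      simp [Matrix.conjTranspose_mul, hA.eq, Matrix.mul_assoc]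
    intro i j
    conv_lhs => rw [← this]
    rfl
  have ht0 : ∑ i, p i = 1 := by
    have : ρ.trace = D.trace := by
      rw [h3, Matrix.trace_mul_comm, ← Matrix.mul_assoc, h1, Matrix.one_mul]
    rw [htr, hD, Matrix.trace_diagonal] at this
    exact_mod_cast this.symm
  have ht1 : (ρ * A).trace = (D * B).trace := by
    rw [h3, hB, Matrix.mul_assoc, Matrix.mul_assoc, Matrix.trace_mul_comm]
    simp only [Matrix.mul_assoc]
  have ht2 : (ρ * (A * A)).trace = (D * (B * B)).trace := by
    have : B * B = Uᴴ * (A * A) * U := by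
      calc B * B = Uᴴ * A * (U * Uᴴ) * A * U := by simp only [hB, Matrix.mul_assoc]
        _ = _ := by rw [h2]; simp only [Matrix.mul_assoc, Matrix.mul_one, Matrix.one_mul]
    rw [this, h3, Matrix.mul_assoc, Matrix.mul_assoc, Matrix.trace_mul_comm]
    simp only [Matrix.mul_assoc]
  have hr1 : ((ρ * A).trace).re = ∑ i, p i * (B i i).re := by
    rw [ht1]
    simp [Matrix.trace, hD, Matrix.diagonal_mul]
  have hr2 : ((ρ * (A * A)).trace).re = ∑ i, ∑ j, p i * ‖B i j‖ ^ 2 := by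
    rw [ht2]
    simp only [Matrix.trace, hD, Matrix.diagonal_mul, Matrix.diag_apply, Complex.re_sum]
    refine Finset.sum_congr rfl fun i _ => ?_
    rw [Matrix.mul_apply, Complex.re_ofReal_mul, Complex.re_sum, Finset.mul_sum]
    refine Finset.sum_congr rfl fun j _ => ?_
    rw [hBH i j]
    congr 1
    rw [← Complex.normSq_eq_norm_sq, Complex.normSq_apply]
    simp [Complex.mul_re]
  have hN : ∀ i j, ‖B j i‖ = ‖B i j‖ := fun i j => by rw [hBH i j, norm_star]
  have hr3 : ((ρ * (A * A)).trace).re = ∑ i, ∑ j, p j * ‖B i j‖ ^ 2 := by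
    rw [hr2, Finset.sum_comm]
    refine Finset.sum_congr rfl fun i _ => Finset.sum_congr rfl fun j _ => ?_
    rw [hN]
  have key : ∑ i, ∑ j, (p i - p j) ^ 2 / (p i + p j) * ‖B i j‖ ^ 2 ≤
      ∑ i, ∑ j, (p i * ‖B i j‖ ^ 2 + p j * ‖B i j‖ ^ 2
        - if i = j then 2 * (p i * (B i i).re ^ 2) else 0) := by
    refine Finset.sum_le_sum fun i _ => Finset.sum_le_sum fun j _ => ?_
    split_ifs with h
    · subst h
      have : (B i i).re ^ 2 ≤ ‖B i i‖ ^ 2 := by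
        rw [← Complex.normSq_eq_norm_sq, Complex.normSq_apply]
        nlinarith [mul_self_nonneg (B i i).im]
      have := mul_le_mul_of_nonneg_left this (hp i)
      simp only [sub_self]
      norm_num
      linarith
    · rw [sub_zero, ← add_mul]
      refine mul_le_mul_of_nonneg_right ?_ (sq_nonneg _)
      refine div_le_of_le_mul₀ (add_nonneg (hp i) (hp j)) (add_nonneg (hp i) (hp j)) ?_
      nlinarith [mul_nonneg (hp i) (hp j)]
  simp only [Finset.sum_sub_distrib, Finset.sum_add_distrib, Finset.sum_ite_eq,
    Finset.mem_univ, if_true, ← hr3, ← Finset.mul_sum] at key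
  have jensen : (∑ i, p i * (B i i).re) ^ 2 ≤ ∑ i, p i * (B i i).re ^ 2 :=
    Real.pow_arith_mean_le_arith_mean_pow_of_even Finset.univ p (fun i => (B i i).re)
      (fun i _ => hp i) ht0 even_two
  unfold sldSkew matVariance
  simp only [hBe]
  simp only [← Finset.mul_sum] at hr2
  rw [hr1]
  linarith
end
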